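/- arXiv:1806.07771 — 7 statements merged into one kernel-verified Lean document; each statement's English description precedes it below -/
import Mathlib

section
/- Let H be a real Banach space, F : H → H continuous, and E : ℝ × H → H a continuously (Fréchet) differentiable flow for u' = F(u): E(0,u) = u, E(t+s,u) = E(t,E(s,u)), and ∂₁E(t,u) = F(E(t,u)). Let u₀ ∈ H and let y : ℝ → H be a continuously differentiable curve with y(0) = u₀ (the numerical solution), and define its defect d(s) = y'(s) − F(y(s)). Then for every t ≥ 0 the nonlinear variation-of-constants (Gröbner–Alekseev) identity holds: y(t) − E(t,u₀) = ∫₀ᵗ D₂E(t−s, y(s))(d(s)) ds. -/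
/-!
The integrand is the derivative of the curve `s ↦ E (t - s) (y s)`, which runs from `E t u₀` at
`s = 0` to `y t` at `s = t`. Indeed the chain rule gives the derivative
`-F (E (t - s) (y s)) + D₂E (t - s, y s) (y' s)`. Differentiating the group law
`E (t + σ) u = E t (E σ u)` at `σ = 0` shows that `D₂E` transports the vector field along the flow,
`D₂E (t, u) (F u) = F (E t u)`, so the two terms combine to `D₂E (t - s, y s) (y' s - F (y s))`.
-/

open Function MeasureTheory Set

section Calculus

variable {𝕜 V W : Type*} [NontriviallyNormedField 𝕜]
  [NormedAddCommGroup V] [NormedSpace 𝕜 V] [NormedAddCommGroup W] [NormedSpace 𝕜 W]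

theorem hasDerivAt_comp_of_differentiableAt_uncurry {f : 𝕜 → V → W} {τ : 𝕜 → 𝕜} {y : 𝕜 → V}
    {τ' s : 𝕜} {y' : V} {w : W} (hf : DifferentiableAt 𝕜 (uncurry f) (τ s, y s))
    (hw : HasDerivAt (fun r => f r (y s)) w (τ s))
    (hτ : HasDerivAt τ τ' s) (hy : HasDerivAt y y' s) :
    HasDerivAt (fun r => f (τ r) (y r)) (τ' • w + fderiv 𝕜 (f (τ s)) (y s) y') s := by
  set f' := fderiv 𝕜 (uncurry f) (τ s, y s)
  have hf' : HasFDerivAt (uncurry f) f' (τ s, y s) := hf.hasFDerivAt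
  have line_deriv : HasDerivAt (fun r => (r, y s)) (1, 0) (τ s) :=
    (hasDerivAt_id (τ s)).prodMk (hasDerivAt_const (τ s) (y s))
  have partial_fst : f' (1, 0) = w :=
    (hf'.comp_hasDerivAt (τ s) line_deriv :).unique hw
  have partial_snd : fderiv 𝕜 (f (τ s)) (y s) = f'.comp (.inr 𝕜 𝕜 V) :=
    (hf'.comp (y s) (hasFDerivAt_prodMk_right (τ s) (y s))).fderiv
  have total_eq_sum : f' (τ', y') = τ' • w + fderiv 𝕜 (f (τ s)) (y s) y' := calc
    f' (τ', y') = f' (τ' • (1, 0) + (0, y')) := by simp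
    _ = τ' • w + fderiv 𝕜 (f (τ s)) (y s) y' := by
      rw [map_add, map_smul, partial_fst, partial_snd, ContinuousLinearMap.comp_apply,
        ContinuousLinearMap.inr_apply]
  rw [← total_eq_sum]
  exact hf'.comp_hasDerivAt s (hτ.prodMk hy)

theorem intervalIntegrable_clm_apply_of_continuousOn
    {μ : Measure ℝ} {a b : ℝ} {A : ℝ → V →L[𝕜] W} {g : ℝ → V}
    (hA : ContinuousOn A (uIcc a b)) (hg : IntervalIntegrable g μ a b) :
    IntervalIntegrable (fun s => A s (g s)) μ a b := by
  rw [intervalIntegrable_iff] at hg ⊢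
  obtain ⟨C, hC⟩ := isCompact_uIcc.exists_bound_of_continuousOn hA
  have A_measurable : AEStronglyMeasurable A (μ.restrict (uIoc a b)) :=
    (hA.mono uIoc_subset_uIcc).aestronglyMeasurable measurableSet_uIoc
  have A_bounded : ∀ᵐ s ∂μ.restrict (uIoc a b), ‖A s‖ ≤ C :=
    ae_restrict_of_forall_mem measurableSet_uIoc fun s hs => hC s (uIoc_subset_uIcc hs)
  exact (ContinuousLinearMap.id 𝕜 (V →L[𝕜] W)).integrable_of_bilin_of_bdd_left C
    A_measurable A_bounded hg

end Calculus

section Flow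

variable {H : Type*} [NormedAddCommGroup H] [NormedSpace ℝ H]

/-- `E` is a global flow of the autonomous equation `u' = F u`: a one-parameter group of
self-maps of `H` whose trajectories `τ ↦ E τ u` solve the equation. No regularity in `u` is
included. -/
structure IsFlowOf (E : ℝ → H → H) (F : H → H) : Prop where
  zero_apply : ∀ u, E 0 u = u
  add_apply : ∀ t s u, E (t + s) u = E t (E s u)
  hasDerivAt : ∀ t u, HasDerivAt (fun τ => E τ u) (F (E t u)) t

namespace IsFlowOf

variable {E : ℝ → H → H} {F : H → H}

theorem hasDerivAt_zero (h : IsFlowOf E F) (u : H) : HasDerivAt (fun τ => E τ u) (F u) 0 := by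
  simpa only [h.zero_apply] using h.hasDerivAt 0 u

theorem fderiv_apply_vectorField (h : IsFlowOf E F) {t : ℝ} {u : H}
    (hE : DifferentiableAt ℝ (E t) u) : fderiv ℝ (E t) u (F u) = F (E t u) := by
  have via_chain_rule : HasDerivAt (fun σ => E t (E σ u)) (fderiv ℝ (E t) u (F u)) 0 :=
    hE.hasFDerivAt.comp_hasDerivAt_of_eq 0 (h.hasDerivAt_zero u) (h.zero_apply u).symm
  have via_group_law : HasDerivAt (fun σ => E t (E σ u)) (F (E t u)) 0 := by
    simpa only [← h.add_apply, add_zero] using (h.hasDerivAt (t + 0) u).comp_const_add t 0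
  exact via_chain_rule.unique via_group_law

theorem continuous_vectorField (h : IsFlowOf E F) (hE : ContDiff ℝ 1 (uncurry E)) :
    Continuous F := by
  have F_eq : F = fun u => fderiv ℝ (fun τ => E τ u) 0 1 :=
    funext fun u => by rw [fderiv_apply_one_eq_deriv, (h.hasDerivAt_zero u).deriv]
  have hswap : ContDiff ℝ 1 (uncurry fun u τ => E τ u) := hE.comp (contDiff_snd.prodMk contDiff_fst)
  rw [F_eq]
  exact (Continuous.fderiv_one hswap continuous_const).clm_apply continuous_const

theorem hasDerivAt_comp_const_sub (h : IsFlowOf E F) {y : ℝ → H} {y' : H} {b s : ℝ}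
    (hE : DifferentiableAt ℝ (uncurry E) (b - s, y s)) (hy : HasDerivAt y y' s) :
    HasDerivAt (fun r => E (b - r) (y r)) (fderiv ℝ (E (b - s)) (y s) (y' - F (y s))) s := by
  have hEs : DifferentiableAt ℝ (E (b - s)) (y s) :=
    hE.comp (y s) (hasFDerivAt_prodMk_right (b - s) (y s)).differentiableAt
  have hderiv := hasDerivAt_comp_of_differentiableAt_uncurry hE (h.hasDerivAt (b - s) (y s))
    ((hasDerivAt_id s).const_sub b) hy
  rwa [neg_one_smul, neg_add_eq_sub, ← h.fderiv_apply_vectorField hEs, ← map_sub] at hderiv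

theorem intervalIntegrable_fderiv_defect (h : IsFlowOf E F) (hE : ContDiff ℝ 1 (uncurry E))
    {μ : Measure ℝ} [IsLocallyFiniteMeasure μ] {y y' : ℝ → H} {a b : ℝ}
    (hy : ContinuousOn y (uIcc a b)) (hy' : IntervalIntegrable y' μ a b) :
    IntervalIntegrable (fun s => fderiv ℝ (E (b - s)) (y s) (y' s - F (y s))) μ a b := by
  have hD₂E : Continuous fun q : ℝ × H => fderiv ℝ (E (b - q.1)) q.2 := by
    refine Continuous.fderiv_one (f := fun q : ℝ × H => E (b - q.1)) ?_ continuous_snd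
    exact hE.comp (f := fun q : (ℝ × H) × H => (b - q.1.1, q.2)) (by fun_prop)
  have hFy : ContinuousOn (fun s => F (y s)) (uIcc a b) :=
    (h.continuous_vectorField hE).comp_continuousOn hy
  exact intervalIntegrable_clm_apply_of_continuousOn
    (hD₂E.comp_continuousOn (continuousOn_id.prodMk hy)) (hy'.sub hFy.intervalIntegrable)

end IsFlowOf

theorem groebner_alekseev_general [CompleteSpace H] {E : ℝ → H → H} {F : H → H}
    (hflow : IsFlowOf E F) (hE : ContDiff ℝ 1 (uncurry E)) {y y' : ℝ → H} {a b : ℝ}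
    (hy : ∀ s ∈ uIcc a b, HasDerivAt y (y' s) s) (hy' : IntervalIntegrable y' volume a b) :
    y b - E (b - a) (y a) =
      ∫ s in a..b, fderiv ℝ (E (b - s)) (y s) (y' s - F (y s)) := by
  have hderiv : ∀ s ∈ uIcc a b, HasDerivAt (fun r => E (b - r) (y r))
      (fderiv ℝ (E (b - s)) (y s) (y' s - F (y s))) s := fun s hs =>
    hflow.hasDerivAt_comp_const_sub (hE.differentiable one_ne_zero _) (hy s hs)
  have hint := hflow.intervalIntegrable_fderiv_defect hE (HasDerivAt.continuousOn hy) hy'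
  rw [intervalIntegral.integral_eq_sub_of_hasDerivAt hderiv hint, sub_self, hflow.zero_apply]

end Flow

/-- Gröbner–Alekseev (nonlinear variation-of-constants) formula: the deviation of a `C¹`
curve `y` (with `y 0 = u₀` and defect `d s = y' s - F (y s)`) from the exact flow `E` of
`u' = F(u)` is `y t - E t u₀ = ∫₀ᵗ D₂E(t-s, y s) (d s) ds`. -/
theorem groebner_alekseev
    {H : Type*} [NormedAddCommGroup H] [NormedSpace ℝ H] [CompleteSpace H]
    (F : H → H) (hF : Continuous F)
    (E : ℝ → H → H)
    (hE : ContDiff ℝ 1 (fun q : ℝ × H => E q.1 q.2))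
    (hE0 : ∀ u, E 0 u = u)
    (hgroup : ∀ t s u, E (t + s) u = E t (E s u))
    (hEt : ∀ t u, HasDerivAt (fun τ => E τ u) (F (E t u)) t)
    (u₀ : H) (y y' : ℝ → H)
    (hy : ∀ s, HasDerivAt y (y' s) s) (hy' : Continuous y')
    (hy0 : y 0 = u₀)
    (t : ℝ) (ht : 0 ≤ t) :
    y t - E t u₀ =
      ∫ s in (0:ℝ)..t, (fderiv ℝ (E (t - s)) (y s)) (y' s - F (y s)) := by
  simpa only [sub_zero, hy0] using groebner_alekseev_general ⟨hE0, hgroup, hEt⟩ hE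
    (fun s _ => hy s) (hy'.intervalIntegrable 0 t)
end

section
/- Let H be a real Banach space, F : H → H, and E : ℝ × H → H a continuously Fréchet differentiable flow for u' = F(u) (E(0,u) = u, E(t+s,u) = E(t,E(s,u)), ∂₁E(t,u) = F(E(t,u))). Let S : ℝ × H → H be continuously Fréchet differentiable with S(0,u) = u for all u, and define the modified defect D(t,u) = ∂₁S(t,u) − D₂S(t,u)(F(u)). Then for every t ≥ 0 and u₀ ∈ H the local error satisfies S(t,u₀) − E(t,u₀) = ∫₀ᵗ D(s, E(t−s,u₀)) ds. -/
/-!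
Transport the scheme backwards along the solution: the curve `s ↦ S s (u (t - s))` joins
`S 0 (u t)` to `S t (u 0)`. As `u' = F u`, the chain rule says that its velocity at `s` is exactly
the modified defect at `(s, u (t - s))`, and integrating over `[0, t]` gives the local error.
-/

open Set Function

section ModifiedDefect

variable {H G : Type*} [NormedAddCommGroup H] [NormedSpace ℝ H]
  [NormedAddCommGroup G] [NormedSpace ℝ G]
  {F : H → H} {S : ℝ → H → G}

/-- The modified defect `D(s, v) = ∂₁S(s, v) - D₂S(s, v)(F v)` of a one-step scheme `S` for
`u' = F u`, measuring how far `S` is from being transported by the flow. The values of `S` may lie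
in another space than the states, and partial derivatives that do not exist count as `0`. -/
noncomputable def modifiedDefect (F : H → H) (S : ℝ → H → G) (s : ℝ) (v : H) : G :=
  deriv (fun τ => S τ v) s - fderiv ℝ (S s) v (F v)

theorem modifiedDefect_eq_fderiv_uncurry {s : ℝ} {v : H}
    (hS : DifferentiableAt ℝ (uncurry S) (s, v)) :
    modifiedDefect F S s v = fderiv ℝ (uncurry S) (s, v) (1, -F v) := by
  have h_time : HasDerivAt (fun τ => S τ v) (fderiv ℝ (uncurry S) (s, v) (1, 0)) s :=
    hS.hasFDerivAt.comp_hasDerivAt (f := fun τ : ℝ => (τ, v)) s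
      ((hasDerivAt_id s).prodMk (hasDerivAt_const s v))
  have h_state : HasFDerivAt (S s)
      ((fderiv ℝ (uncurry S) (s, v)).comp (ContinuousLinearMap.inr ℝ ℝ H)) v :=
    hS.hasFDerivAt.comp v (hasFDerivAt_prodMk_right s v)
  rw [modifiedDefect, h_time.deriv, h_state.fderiv, ContinuousLinearMap.comp_apply,
    ContinuousLinearMap.inr_apply, ← map_sub, Prod.mk_sub_mk, sub_zero, zero_sub]

theorem hasDerivWithinAt_comp_reversed_integralCurve {u : ℝ → H} {K : Set ℝ} {t s : ℝ}
    (hu : IsIntegralCurveOn u (fun _ => F) K) (hs : t - s ∈ K)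
    (hS : DifferentiableAt ℝ (uncurry S) (s, u (t - s))) :
    HasDerivWithinAt (fun s => S s (u (t - s))) (modifiedDefect F S s (u (t - s)))
      ((t - ·) ⁻¹' K) s := by
  have h_reversed : HasDerivWithinAt (fun s => u (t - s)) (-F (u (t - s))) ((t - ·) ⁻¹' K) s := by
    simpa only [neg_one_smul, comp_def] using (hu _ hs).scomp s
      ((hasDerivWithinAt_id s _).const_sub t) (mapsTo_preimage _ _)
  rw [modifiedDefect_eq_fderiv_uncurry hS]
  exact hS.hasFDerivAt.comp_hasDerivWithinAt (f := fun s => (s, u (t - s))) s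
    ((hasDerivWithinAt_id s _).prodMk h_reversed)

theorem continuousOn_modifiedDefect_comp {X : Type*} [TopologicalSpace X] {K : Set X}
    {σ : X → ℝ} {v : X → H} (hσ : ContinuousOn σ K) (hv : ContinuousOn v K)
    (hFv : ContinuousOn (fun x => F (v x)) K)
    (hS : ∀ x ∈ K, ContDiffAt ℝ 1 (uncurry S) (σ x, v x)) :
    ContinuousOn (fun x => modifiedDefect F S (σ x) (v x)) K := by
  have h_fderiv : ContinuousOn (fun x => fderiv ℝ (uncurry S) (σ x, v x)) K := fun x hx =>
    ((hS x hx).continuousAt_fderiv one_ne_zero).comp_continuousWithinAt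
      (f := fun x => (σ x, v x)) ((hσ x hx).prodMk (hv x hx))
  exact (h_fderiv.clm_apply (continuousOn_const.prodMk hFv.neg)).congr fun x hx =>
    modifiedDefect_eq_fderiv_uncurry ((hS x hx).differentiableAt one_ne_zero)

theorem modified_defect_local_error_representation_general [CompleteSpace G] {u : ℝ → H} {t : ℝ}
    (hu : IsIntegralCurveOn u (fun _ => F) (uIcc 0 t))
    (hFu : ContinuousOn (fun τ => F (u τ)) (uIcc 0 t))
    (hS : ∀ s ∈ uIcc 0 t, ContDiffAt ℝ 1 (uncurry S) (s, u (t - s))) :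
    S t (u 0) - S 0 (u t) = ∫ s in (0 : ℝ)..t, modifiedDefect F S s (u (t - s)) := by
  have h_preimage : (t - ·) ⁻¹' uIcc 0 t = uIcc 0 t := by
    rw [preimage_const_sub_uIcc, sub_zero, sub_self, uIcc_comm]
  have h_mapsTo : MapsTo (t - ·) (uIcc 0 t) (uIcc 0 t) := h_preimage.ge
  have h_deriv : ∀ s ∈ uIcc 0 t, HasDerivWithinAt (fun s => S s (u (t - s)))
      (modifiedDefect F S s (u (t - s))) (uIcc 0 t) s := fun s hs => by
    simpa only [h_preimage] using hasDerivWithinAt_comp_reversed_integralCurve hu (h_mapsTo hs)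
      ((hS s hs).differentiableAt one_ne_zero)
  have h_sub : ContinuousOn (t - ·) (uIcc 0 t) := (continuous_sub_left t).continuousOn
  have h_defect : ContinuousOn (fun s => modifiedDefect F S s (u (t - s))) (uIcc 0 t) :=
    continuousOn_modifiedDefect_comp continuousOn_id (hu.continuousOn.comp h_sub h_mapsTo)
      (hFu.comp h_sub h_mapsTo) hS
  rw [intervalIntegral.integral_eq_sub_of_hasDeriv_right
    (fun s hs => (h_deriv s hs).continuousWithinAt)
    (fun s hs => ((h_deriv s (Ioo_subset_Icc_self hs)).hasDerivAt
      (Icc_mem_nhds hs.1 hs.2)).hasDerivWithinAt)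
    h_defect.intervalIntegrable, sub_self, sub_zero]

end ModifiedDefect

/-- Local error representation in terms of the modified defect
`D(t,u) = ∂₁S(t,u) - D₂S(t,u)(F(u))`:
`S(t,u₀) - E(t,u₀) = ∫₀ᵗ D(s, E(t-s,u₀)) ds`. -/
theorem modified_defect_local_error_representation
    {H : Type*} [NormedAddCommGroup H] [NormedSpace ℝ H] [CompleteSpace H]
    (F : H → H) (E : ℝ → H → H)
    (hE : ContDiff ℝ 1 (fun q : ℝ × H => E q.1 q.2))
    (hE0 : ∀ u, E 0 u = u)
    (hgroup : ∀ t s u, E (t + s) u = E t (E s u))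
    (hEt : ∀ t u, HasDerivAt (fun τ => E τ u) (F (E t u)) t)
    (S : ℝ → H → H)
    (hS : ContDiff ℝ 1 (fun q : ℝ × H => S q.1 q.2))
    (hS0 : ∀ u, S 0 u = u)
    (t : ℝ) (ht : 0 ≤ t) (u₀ : H) :
    S t u₀ - E t u₀ =
      ∫ s in (0:ℝ)..t,
        (deriv (fun τ => S τ (E (t - s) u₀)) s
          - fderiv ℝ (S s) (E (t - s) u₀) (F (E (t - s) u₀))) := by
  have h_curve : IsIntegralCurve (fun τ => E τ u₀) (fun _ => F) := fun τ => hEt τ u₀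
  have h_velocity : Continuous (fun τ => F (E τ u₀)) := by
    have hE₀ : ContDiff ℝ 1 (fun τ => E τ u₀) := hE.comp (contDiff_prodMk_left u₀)
    simpa only [funext fun τ => (hEt τ u₀).deriv] using hE₀.continuous_deriv_one
  simpa only [hE0, hS0, modifiedDefect] using modified_defect_local_error_representation_general
    (h_curve.isIntegralCurveOn (uIcc 0 t)) h_velocity.continuousOn fun s _ => hS.contDiffAt
end

section
/- Let H be a real Banach space, F : H → H, and E : ℝ × H → H a continuously Fréchet differentiable flow for u' = F(u) (E(0,u) = u, E(t+s,u) = E(t,E(s,u)), ∂₁E(t,u) = F(E(t,u))). Let S : ℝ × H → H be continuously Fréchet differentiable with S(0,u) = u for all u, and define the symmetrized defect Ds(t,u) = ∂₁S(t,u) − (1/2)(F(S(t,u)) + D₂S(t,u)(F(u))). Then for every t ≥ 0 and u₀ ∈ H the local error has the symmetrized integral representation S(t,u₀) − E(t,u₀) = ∫₀ᵗ D₂E((t−s)/2, S(s, E((t−s)/2, u₀)))(Ds(s, E((t−s)/2, u₀))) ds. -/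
/-!
The curve `s ↦ E ((t - s) / 2) (S s (E ((t - s) / 2) u₀))` runs from `E t u₀` at `s = 0` to
`S t u₀` at `s = t`. Write `r = (t - s) / 2` and `w = E r u₀`. Differentiating the curve, the outer
flow contributes `-(1/2) F(E r (S s w))` and the inner one `-(1/2) D(E r) (D(S s)(w) (F w))`. A flow
transports its own vector field, `F(E r v) = D(E r)(v) (F v)`, so the whole derivative is `D(E r)`
applied to the symmetrized defect, and the fundamental theorem of calculus concludes.
-/

section Calculus

variable {𝕜 X Y : Type*} [NontriviallyNormedField 𝕜] [NormedAddCommGroup X] [NormedSpace 𝕜 X]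
  [NormedAddCommGroup Y] [NormedSpace 𝕜 Y]

theorem hasDerivAt_comp_of_differentiableAt_uncurry_s3 {G : 𝕜 → X → Y} {a : 𝕜 → 𝕜} {v : 𝕜 → X}
    {a' : 𝕜} {v' : X} {s : 𝕜}
    (hG : DifferentiableAt 𝕜 (fun q : 𝕜 × X => G q.1 q.2) (a s, v s))
    (ha : HasDerivAt a a' s) (hv : HasDerivAt v v' s) :
    HasDerivAt (fun σ => G (a σ) (v σ))
      (a' • deriv (fun τ => G τ (v s)) (a s) + fderiv 𝕜 (G (a s)) (v s) v') s := by
  set L := fderiv 𝕜 (fun q : 𝕜 × X => G q.1 q.2) (a s, v s)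
  have hL : HasFDerivAt (fun q : 𝕜 × X => G q.1 q.2) L (a s, v s) := hG.hasFDerivAt
  have h_time : deriv (fun τ => G τ (v s)) (a s) = L (1, 0) :=
    (hL.comp_hasDerivAt (f := fun τ => (τ, v s)) (a s)
      ((hasDerivAt_id (a s)).prodMk (hasDerivAt_const (a s) (v s)))).deriv
  have h_space : fderiv 𝕜 (G (a s)) (v s) = L.comp (.inr 𝕜 𝕜 X) :=
    (hL.comp (v s) (hasFDerivAt_prodMk_right (a s) (v s))).fderiv
  have h_total : L (a', v') = a' • L (1, 0) + L.comp (.inr 𝕜 𝕜 X) v' := by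
    rw [← map_smul, ContinuousLinearMap.comp_apply, ← map_add]
    simp
  rw [h_time, h_space, ← h_total]
  exact hL.comp_hasDerivAt (f := fun σ => (a σ, v σ)) s (ha.prodMk hv)

end Calculus

section SymmetrizedInterpolant

variable {H : Type*} {E S : ℝ → H → H}

/-- The curve in `s` that joins `E t u₀` (at `s = 0`) to `S t u₀` (at `s = t`) by placing a step of
length `s` of the scheme `S` between two flow steps of length `(t - s) / 2`. -/
noncomputable def symmetrizedInterpolant (E S : ℝ → H → H) (t : ℝ) (u₀ : H) (s : ℝ) : H :=
  E ((t - s) / 2) (S s (E ((t - s) / 2) u₀))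

theorem symmetrizedInterpolant_zero (hgroup : ∀ t s u, E (t + s) u = E t (E s u))
    (hS0 : ∀ u, S 0 u = u) (t : ℝ) (u₀ : H) : symmetrizedInterpolant E S t u₀ 0 = E t u₀ := by
  rw [symmetrizedInterpolant, sub_zero, hS0, ← hgroup, add_halves]

theorem symmetrizedInterpolant_self (hE0 : ∀ u, E 0 u = u) (t : ℝ) (u₀ : H) :
    symmetrizedInterpolant E S t u₀ t = S t u₀ := by
  simp only [symmetrizedInterpolant, sub_self, zero_div, hE0]

end SymmetrizedInterpolant

section SymmetrizedDefect

variable {H : Type*} [NormedAddCommGroup H] [NormedSpace ℝ H] {F : H → H} {E S : ℝ → H → H}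

/-- The symmetrized defect `Ds(s, u)` of the one-step scheme `S` for `u' = F(u)`: the mean of the
two defects `∂₁S(s, u) - F(S(s, u))` and `∂₁S(s, u) - D₂S(s, u)(F(u))`, which both vanish when `S`
is the exact flow. -/
noncomputable def symmetrizedDefect (F : H → H) (S : ℝ → H → H) (s : ℝ) (u : H) : H :=
  deriv (fun τ => S τ u) s - (1 / 2 : ℝ) • (F (S s u) + fderiv ℝ (S s) u (F u))

theorem fderiv_flow_apply_vectorField (hE0 : ∀ u, E 0 u = u)
    (hgroup : ∀ t s u, E (t + s) u = E t (E s u))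
    (hEt : ∀ t u, HasDerivAt (fun τ => E τ u) (F (E t u)) t)
    {r : ℝ} {v : H} (hE : DifferentiableAt ℝ (E r) v) :
    fderiv ℝ (E r) v (F v) = F (E r v) := by
  have h_orbit : HasDerivAt (fun τ => E τ v) (F v) 0 := by
    simpa only [hE0] using hEt 0 v
  have h_chain : HasDerivAt (fun τ => E r (E τ v)) (fderiv ℝ (E r) v (F v)) 0 :=
    hE.hasFDerivAt.comp_hasDerivAt_of_eq 0 h_orbit (hE0 v).symm
  have h_shift : HasDerivAt (fun τ => E (r + τ) v) (F (E r v)) 0 :=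
    HasDerivAt.comp_const_add r 0 (by simpa only [add_zero] using hEt r v)
  simp only [hgroup] at h_shift
  exact h_chain.unique h_shift

theorem hasDerivAt_symmetrizedInterpolant
    (hE : Differentiable ℝ (fun q : ℝ × H => E q.1 q.2)) (hE0 : ∀ u, E 0 u = u)
    (hgroup : ∀ t s u, E (t + s) u = E t (E s u))
    (hEt : ∀ t u, HasDerivAt (fun τ => E τ u) (F (E t u)) t)
    (hS : Differentiable ℝ (fun q : ℝ × H => S q.1 q.2)) (t : ℝ) (u₀ : H) (s : ℝ) :
    HasDerivAt (symmetrizedInterpolant E S t u₀)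
      (fderiv ℝ (E ((t - s) / 2)) (S s (E ((t - s) / 2) u₀))
        (symmetrizedDefect F S s (E ((t - s) / 2) u₀))) s := by
  set r := (t - s) / 2 with hr
  set w := E r u₀ with hw
  have h_time : HasDerivAt (fun σ : ℝ => (t - σ) / 2) (-1 / 2) s :=
    ((hasDerivAt_id s).const_sub t).div_const 2
  have h_inner : HasDerivAt (fun σ => E ((t - σ) / 2) u₀) ((-1 / 2 : ℝ) • F w) s :=
    HasDerivAt.scomp (g₁ := fun τ => E τ u₀) s (hEt r u₀) h_time
  have h_scheme : HasDerivAt (fun σ => S σ (E ((t - σ) / 2) u₀))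
      ((1 : ℝ) • deriv (fun τ => S τ w) s + fderiv ℝ (S s) w ((-1 / 2 : ℝ) • F w)) s :=
    hasDerivAt_comp_of_differentiableAt_uncurry_s3 (hS _) (hasDerivAt_id s) h_inner
  have h_outer := hasDerivAt_comp_of_differentiableAt_uncurry_s3 (hE _) h_time h_scheme
  have h_transport : fderiv ℝ (E r) (S s w) (F (S s w)) = F (E r (S s w)) :=
    fderiv_flow_apply_vectorField hE0 hgroup hEt
      ((hE (r, S s w)).comp (S s w) (hasFDerivAt_prodMk_right r (S s w)).differentiableAt)
  refine h_outer.congr_deriv ?_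
  rw [← hr, ← hw, (hEt r (S s w)).deriv, ← h_transport, ← map_smul, ← map_add,
    symmetrizedDefect, map_smul]
  congr 1
  module

theorem contDiff_symmetrizedInterpolant {n : WithTop ℕ∞}
    (hE : ContDiff ℝ n (fun q : ℝ × H => E q.1 q.2))
    (hS : ContDiff ℝ n (fun q : ℝ × H => S q.1 q.2)) (t : ℝ) (u₀ : H) :
    ContDiff ℝ n (symmetrizedInterpolant E S t u₀) := by
  have h_time : ContDiff ℝ n (fun s : ℝ => (t - s) / 2) := by fun_prop
  have h_inner : ContDiff ℝ n (fun s : ℝ => E ((t - s) / 2) u₀) :=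
    hE.comp (h_time.prodMk contDiff_const)
  have h_scheme : ContDiff ℝ n (fun s : ℝ => S s (E ((t - s) / 2) u₀)) :=
    hS.comp (contDiff_id.prodMk h_inner)
  exact hE.comp (h_time.prodMk h_scheme)

theorem symmetrized_defect_local_error_representation_general [CompleteSpace H]
    (hE : ContDiff ℝ 1 (fun q : ℝ × H => E q.1 q.2)) (hE0 : ∀ u, E 0 u = u)
    (hgroup : ∀ t s u, E (t + s) u = E t (E s u))
    (hEt : ∀ t u, HasDerivAt (fun τ => E τ u) (F (E t u)) t)
    (hS : ContDiff ℝ 1 (fun q : ℝ × H => S q.1 q.2)) (hS0 : ∀ u, S 0 u = u) (t : ℝ) (u₀ : H) :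
    S t u₀ - E t u₀ =
      ∫ s in (0 : ℝ)..t, fderiv ℝ (E ((t - s) / 2)) (S s (E ((t - s) / 2) u₀))
        (symmetrizedDefect F S s (E ((t - s) / 2) u₀)) := by
  let φ := symmetrizedInterpolant E S t u₀
  calc
    S t u₀ - E t u₀ = φ t - φ 0 := by
      simp only [φ, symmetrizedInterpolant_self hE0,
        symmetrizedInterpolant_zero hgroup hS0]
    _ = ∫ s in (0 : ℝ)..t, deriv φ s :=
      (intervalIntegral.integral_deriv_of_contDiffOn_uIcc
        (contDiff_symmetrizedInterpolant hE hS t u₀).contDiffOn).symm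
    _ = _ := intervalIntegral.integral_congr fun s _ =>
      (hasDerivAt_symmetrizedInterpolant (hE.differentiable one_ne_zero) hE0 hgroup hEt
        (hS.differentiable one_ne_zero) t u₀ s).deriv

end SymmetrizedDefect

/-- Local error representation in terms of the symmetrized defect
`Ds(t,u) = ∂₁S(t,u) - (1/2)(F(S(t,u)) + D₂S(t,u)(F(u)))`:
`S(t,u₀) - E(t,u₀) = ∫₀ᵗ D₂E((t-s)/2, S(s, E((t-s)/2,u₀))) (Ds(s, E((t-s)/2,u₀))) ds`. -/
theorem symmetrized_defect_local_error_representation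
    {H : Type*} [NormedAddCommGroup H] [NormedSpace ℝ H] [CompleteSpace H]
    (F : H → H) (E : ℝ → H → H)
    (hE : ContDiff ℝ 1 (fun q : ℝ × H => E q.1 q.2))
    (hE0 : ∀ u, E 0 u = u)
    (hgroup : ∀ t s u, E (t + s) u = E t (E s u))
    (hEt : ∀ t u, HasDerivAt (fun τ => E τ u) (F (E t u)) t)
    (S : ℝ → H → H)
    (hS : ContDiff ℝ 1 (fun q : ℝ × H => S q.1 q.2))
    (hS0 : ∀ u, S 0 u = u)
    (t : ℝ) (ht : 0 ≤ t) (u₀ : H) :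
    S t u₀ - E t u₀ =
      ∫ s in (0:ℝ)..t,
        (fderiv ℝ (E ((t - s) / 2)) (S s (E ((t - s) / 2) u₀)))
          (deriv (fun τ => S τ (E ((t - s) / 2) u₀)) s
            - (1/2 : ℝ) • (F (S s (E ((t - s) / 2) u₀))
                + fderiv ℝ (S s) (E ((t - s) / 2) u₀) (F (E ((t - s) / 2) u₀)))) :=
  symmetrized_defect_local_error_representation_general hE hE0 hgroup hEt hS hS0 t u₀
end

section
/- Let H be a real Banach space, p ≥ 2 an even natural number, F : H → H bounded by M and Lipschitz with constant Λ, and E : ℝ × H → H a flow for u' = F(u) satisfying E(0,u) = u, E(t+s,u) = E(t,E(s,u)), and E(t,u) = u + ∫₀ᵗ F(E(σ,u)) dσ. Let Ŝ : ℝ × H → H be a one-step map with Ŝ(0,u) = u such that: (i) there exist C, t* > 0 with ‖Ŝ(−t, Ŝ(t,u)) − u‖ ≤ C|t|^{2p+2} for all |t| ≤ t* and u ∈ H (almost self-adjointness); (ii) the local error admits an expansion Ŝ(t,u) − E(t,u) = c(u)·t^{p+2} + r(t,u), where c : H → H is bounded and Lipschitz and ‖r(t,u)‖ ≤ C'|t|^{p+3}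 for |t| ≤ t* and all u. Then c(u) = 0 for every u ∈ H; consequently ‖Ŝ(t,u) − E(t,u)‖ ≤ C'|t|^{p+3} for |t| ≤ t*, i.e. the corrected scheme has order p+2. -/
/-!
Write `q = p + 2`. Running `S` for time `t` and then for time `-t` makes the local error
`t ^ q • c u` in the first step and `(-t) ^ q • c (S t u)` in the second. Backward transport by the
flow is a perturbation of the identity with Lipschitz constant `exp (K|t|) - 1` (Grönwall), so it
does not alter the first error to leading order, and continuity of `c` lets the second be evaluated
at `u`. The two errors therefore add up to `(t ^ q + (-t) ^ q) • c u + o(t ^ q)`. For even `q` they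
do not cancel, so a defect that is `o(t ^ q)` forces `2 • c u = 0`.
-/

open Asymptotics Filter Topology
open scoped NNReal

section NormedSpace

variable {H : Type*} [NormedAddCommGroup H] [NormedSpace ℝ H]

section IntegralCurve

variable {K : ℝ≥0} {v : ℝ → H → H} {f g : ℝ → H}

theorem gronwallBound_zero_mul_self (K δ t : ℝ) :
    gronwallBound 0 K (K * δ) t = (Real.exp (K * t) - 1) * δ := by
  rcases eq_or_ne K 0 with rfl | hK
  · simp [gronwallBound_K0]
  · rw [gronwallBound_of_K_ne_0 hK, mul_div_cancel_left₀ δ hK]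
    ring

theorem norm_sub_sub_sub_le_of_isIntegralCurve_of_nonneg (hv : ∀ t, LipschitzWith K (v t))
    (hf : IsIntegralCurve f v) (hg : IsIntegralCurve g v) {t : ℝ} (ht : 0 ≤ t) :
    ‖(f t - g t) - (f 0 - g 0)‖ ≤ (Real.exp (K * t) - 1) * ‖f 0 - g 0‖ := by
  have hderiv : ∀ s, HasDerivAt (fun s ↦ (f s - g s) - (f 0 - g 0))
      (v s (f s) - v s (g s)) s := fun s ↦ ((hf s).sub (hg s)).sub_const _
  have hbound : ∀ s, ‖v s (f s) - v s (g s)‖ ≤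
      K * ‖(f s - g s) - (f 0 - g 0)‖ + K * ‖f 0 - g 0‖ := fun s ↦
    calc ‖v s (f s) - v s (g s)‖ ≤ K * ‖f s - g s‖ := (hv s).norm_sub_le _ _
      _ ≤ K * (‖(f s - g s) - (f 0 - g 0)‖ + ‖f 0 - g 0‖) := by
        gcongr
        exact norm_le_norm_sub_add _ _
      _ = _ := mul_add _ _ _
  have hgronwall := norm_le_gronwallBound_of_norm_deriv_right_le (δ := 0) (a := 0) (b := t)
    (fun s _ ↦ (hderiv s).continuousAt.continuousWithinAt)
    (fun s _ ↦ (hderiv s).hasDerivWithinAt) (by simp) (fun s _ ↦ hbound s) t ⟨ht, le_rfl⟩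
  rwa [sub_zero, gronwallBound_zero_mul_self] at hgronwall

theorem norm_sub_sub_sub_le_of_isIntegralCurve (hv : ∀ t, LipschitzWith K (v t))
    (hf : IsIntegralCurve f v) (hg : IsIntegralCurve g v) (t : ℝ) :
    ‖(f t - g t) - (f 0 - g 0)‖ ≤ (Real.exp (K * |t|) - 1) * ‖f 0 - g 0‖ := by
  rcases le_total 0 t with ht | ht
  · rw [abs_of_nonneg ht]
    exact norm_sub_sub_sub_le_of_isIntegralCurve_of_nonneg hv hf hg ht
  · have hv_neg : ∀ s, LipschitzWith K (((-1 : ℝ) • v ∘ (· * (-1))) s) := fun s ↦ by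
      simpa using (hv (-s)).neg
    have hle := norm_sub_sub_sub_le_of_isIntegralCurve_of_nonneg hv_neg
      (hf.comp_mul (-1)) (hg.comp_mul (-1)) (neg_nonneg.2 ht)
    simpa [abs_of_nonpos ht] using hle

end IntegralCurve

section Flow

variable {F : H → H} {K : ℝ≥0} {E : ℝ → H → H}

theorem lipschitzWith_flow_of_eq_add_integral {M : ℝ≥0} (hF : ∀ u, ‖F u‖ ≤ M)
    (hE_add : ∀ t s u, E (t + s) u = E t (E s u))
    (hE : ∀ t u, E t u = u + ∫ σ in (0 : ℝ)..t, F (E σ u)) (u : H) :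
    LipschitzWith M (E · u) := by
  refine LipschitzWith.of_dist_le_mul fun t s ↦ ?_
  have hsub : E t u - E s u = ∫ σ in (0 : ℝ)..t - s, F (E σ (E s u)) := by
    rw [sub_eq_iff_eq_add', ← hE, ← hE_add, sub_add_cancel]
  rw [dist_eq_norm, hsub, Real.dist_eq]
  simpa using intervalIntegral.norm_integral_le_of_norm_le_const (a := 0) (b := t - s)
    fun σ _ ↦ hF (E σ (E s u))

theorem isIntegralCurve_flow_of_eq_add_integral [CompleteSpace H] (hF : Continuous F) {M : ℝ}
    (hFM : ∀ u, ‖F u‖ ≤ M) (hE_add : ∀ t s u, E (t + s) u = E t (E s u))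
    (hE : ∀ t u, E t u = u + ∫ σ in (0 : ℝ)..t, F (E σ u)) (u : H) :
    IsIntegralCurve (E · u) fun _ ↦ F := by
  have hcont : Continuous (E · u) := (lipschitzWith_flow_of_eq_add_integral (M := M.toNNReal)
    (fun u ↦ (hFM u).trans M.le_coe_toNNReal) hE_add hE u).continuous
  intro t
  have hderiv := ((hF.comp hcont).integral_hasStrictDerivAt 0 t).hasDerivAt.const_add u
  exact hderiv.congr_of_eventuallyEq (.of_forall fun s ↦ hE s u)

/-- By autonomy `s ↦ E (s + t) u` is again an integral curve; it passes through `E t u` at `0` and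
through `u` at `-t`. -/
theorem norm_flow_neg_sub_sub_sub_le (hF : LipschitzWith K F) (hE0 : ∀ u, E 0 u = u)
    (hE : ∀ u, IsIntegralCurve (E · u) fun _ ↦ F) (t : ℝ) (u w : H) :
    ‖(E (-t) w - u) - (w - E t u)‖ ≤ (Real.exp (K * |t|) - 1) * ‖w - E t u‖ := by
  have hle := norm_sub_sub_sub_le_of_isIntegralCurve (fun _ ↦ hF) (hE w) ((hE u).comp_add t) (-t)
  simpa [hE0] using hle

theorem flow_neg_sub_sub_sub_isLittleO (hF : LipschitzWith K F) (hE0 : ∀ u, E 0 u = u)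
    (hE : ∀ u, IsIntegralCurve (E · u) fun _ ↦ F) (u : H) (w : ℝ → H) :
    (fun t ↦ (E (-t) (w t) - u) - (w t - E t u)) =o[𝓝 0] fun t ↦ w t - E t u := by
  have hexp : Tendsto (fun t : ℝ ↦ Real.exp (K * |t|) - 1) (𝓝 0) (𝓝 0) :=
    Continuous.tendsto' (by fun_prop) _ _ (by simp)
  have hbound : (fun t ↦ (E (-t) (w t) - u) - (w t - E t u)) =O[𝓝 0]
      fun t ↦ (Real.exp (K * |t|) - 1) * ‖w t - E t u‖ :=
    .of_norm_le fun t ↦ norm_flow_neg_sub_sub_sub_le hF hE0 hE t u (w t)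
  have hsmall := ((isLittleO_one_iff ℝ).2 hexp).mul_isBigO
    (isBigO_refl (fun t ↦ ‖w t - E t u‖) (𝓝 0))
  simpa using hbound.trans_isLittleO hsmall

end Flow

/-- The local error of the one-step map `S` for `E` has the expansion
`S t w - E t w = t ^ q • c w + o(t ^ q)` as `t → 0`. The remainder is uniform for `w` near `u`,
as it has to be evaluated along the numerical trajectory `w = S t u`. -/
def HasLocalErrorExpansionAt (S E : ℝ → H → H) (q : ℕ) (c : H → H) (u : H) : Prop :=
  (fun x : ℝ × H ↦ S x.1 x.2 - E x.1 x.2 - x.1 ^ q • c x.2) =o[𝓝 (0, u)] fun x ↦ x.1 ^ q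

theorem eq_zero_of_pow_smul_isLittleO {q : ℕ} {x : H}
    (h : (fun t : ℝ ↦ t ^ q • x) =o[𝓝 0] fun t ↦ t ^ q) : x = 0 := by
  have hinv := (isBigO_refl (fun t : ℝ ↦ (t ^ q)⁻¹) (𝓝[≠] 0)).smul_isLittleO
    (h.mono nhdsWithin_le_nhds)
  have hconst : (fun _ : ℝ ↦ x) =o[𝓝[≠] 0] fun _ ↦ (1 : ℝ) := by
    refine hinv.congr' ?_ ?_ <;> filter_upwards [self_mem_nhdsWithin] with t ht
    · exact inv_smul_smul₀ (pow_ne_zero q ht) x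
    · exact inv_mul_cancel₀ (pow_ne_zero q ht)
  exact tendsto_nhds_unique tendsto_const_nhds ((isLittleO_one_iff ℝ).1 hconst)

namespace HasLocalErrorExpansionAt

variable {S E : ℝ → H → H} {q : ℕ} {c : H → H} {u : H}

theorem of_norm_le {τ C : ℝ} (hτ : 0 < τ)
    (h : ∀ t u, |t| ≤ τ → ‖S t u - E t u - t ^ q • c u‖ ≤ C * |t| ^ (q + 1)) (u : H) :
    HasLocalErrorExpansionAt S E q c u := by
  have hsmall : ∀ᶠ x : ℝ × H in 𝓝 (0, u), |x.1| ≤ τ :=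
    (continuous_fst.abs.tendsto' (0, u) 0 (by simp)).eventually_le_const hτ
  have hbigO : (fun x : ℝ × H ↦ S x.1 x.2 - E x.1 x.2 - x.1 ^ q • c x.2) =O[𝓝 (0, u)]
      fun x ↦ x.1 ^ (q + 1) :=
    .of_bound C <| hsmall.mono fun x hx ↦ by simpa using h x.1 x.2 hx
  exact hbigO.trans_isLittleO
    ((isLittleO_pow_pow q.lt_succ_self).comp_tendsto (continuous_fst.tendsto (0, u)))

theorem isLittleO (h : HasLocalErrorExpansionAt S E q c u) :
    (fun t ↦ S t u - E t u - t ^ q • c u) =o[𝓝 0] fun t ↦ t ^ q :=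
  IsLittleO.comp_tendsto h (tendsto_id.prodMk_nhds tendsto_const_nhds)

theorem localError_isBigO (h : HasLocalErrorExpansionAt S E q c u) :
    (fun t ↦ S t u - E t u) =O[𝓝 0] fun t ↦ t ^ q := by
  have hlead : (fun t : ℝ ↦ t ^ q • c u) =O[𝓝 0] fun t ↦ t ^ q :=
    .of_bound ‖c u‖ <| .of_forall fun t ↦ by rw [norm_smul, mul_comm]
  simpa using h.isLittleO.isBigO.add hlead

theorem tendsto_self (h : HasLocalErrorExpansionAt S E q c u) (hq : q ≠ 0)
    (hE : Tendsto (E · u) (𝓝 0) (𝓝 u)) : Tendsto (S · u) (𝓝 0) (𝓝 u) := by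
  have hpow : Tendsto (fun t : ℝ ↦ t ^ q) (𝓝 0) (𝓝 0) :=
    (continuous_pow q).tendsto' 0 0 (zero_pow hq)
  simpa using (h.localError_isBigO.trans_tendsto hpow).add hE

/-- `E (-t)` transports the error `t ^ q • c u` of the forward step unchanged to leading order; the
backward step from `w = S t u` adds `(-t) ^ q • c w`. -/
theorem adjointDefect_isLittleO {F : H → H} {K : ℝ≥0} (h : HasLocalErrorExpansionAt S E q c u)
    (hq : q ≠ 0) (hF : LipschitzWith K F) (hE0 : ∀ u, E 0 u = u)
    (hE : ∀ u, IsIntegralCurve (E · u) fun _ ↦ F) (hc : ContinuousAt c u) :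
    (fun t ↦ S (-t) (S t u) - u - (t ^ q + (-t) ^ q) • c u) =o[𝓝 0] fun t ↦ t ^ q := by
  have hneg : Tendsto (fun t : ℝ ↦ -t) (𝓝 0) (𝓝 0) := continuous_neg.tendsto' 0 0 neg_zero
  have hneg_pow : (fun t : ℝ ↦ (-t) ^ q) =O[𝓝 0] fun t ↦ t ^ q :=
    .of_bound 1 <| .of_forall fun t ↦ by simp
  have hSu : Tendsto (S · u) (𝓝 0) (𝓝 u) :=
    h.tendsto_self hq (by simpa [hE0] using (hE u 0).continuousAt.tendsto)
  have hbackward : (fun t ↦ S (-t) (S t u) - E (-t) (S t u) - (-t) ^ q • c (S t u)) =o[𝓝 0]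
      fun t ↦ t ^ q :=
    (IsLittleO.comp_tendsto h (hneg.prodMk_nhds hSu)).trans_isBigO hneg_pow
  have htransport : (fun t ↦ (E (-t) (S t u) - u) - (S t u - E t u)) =o[𝓝 0] fun t ↦ t ^ q :=
    (flow_neg_sub_sub_sub_isLittleO hF hE0 hE u (S · u)).trans_isBigO h.localError_isBigO
  have hcoeff : (fun t ↦ (-t) ^ q • (c (S t u) - c u)) =o[𝓝 0] fun t ↦ t ^ q := by
    have hzero : Tendsto (fun t ↦ c (S t u) - c u) (𝓝 0) (𝓝 0) :=
      tendsto_sub_nhds_zero_iff.2 (hc.tendsto.comp hSu)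
    simpa using hneg_pow.smul_isLittleO ((isLittleO_one_iff ℝ).2 hzero)
  refine (((hbackward.add htransport).add h.isLittleO).add hcoeff).congr_left fun t ↦ ?_
  module

theorem coeff_eq_zero {F : H → H} {K : ℝ≥0} (h : HasLocalErrorExpansionAt S E q c u)
    (hq : Even q) (hq0 : q ≠ 0) (hF : LipschitzWith K F) (hE0 : ∀ u, E 0 u = u)
    (hE : ∀ u, IsIntegralCurve (E · u) fun _ ↦ F) (hc : ContinuousAt c u)
    (hS : (fun t ↦ S (-t) (S t u) - u) =o[𝓝 0] fun t ↦ t ^ q) : c u = 0 := by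
  have hdouble : (fun t : ℝ ↦ t ^ q • (2 : ℝ) • c u) =o[𝓝 0] fun t ↦ t ^ q :=
    (hS.sub (h.adjointDefect_isLittleO hq0 hF hE0 hE hc)).congr_left fun t ↦ by
      rw [hq.neg_pow]
      module
  exact (smul_eq_zero_iff_right two_ne_zero).1 (eq_zero_of_pow_smul_isLittleO hdouble)

end HasLocalErrorExpansionAt

theorem almost_selfadjoint_corrected_scheme_order_general
    {q m : ℕ} (hq : Even q) (hq0 : q ≠ 0) (hqm : q < m)
    {F : H → H} {K : ℝ≥0} (hF : LipschitzWith K F)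
    {E : ℝ → H → H} (hE0 : ∀ u, E 0 u = u) (hE : ∀ u, IsIntegralCurve (E · u) fun _ ↦ F)
    {S : ℝ → H → H} {C τ : ℝ} (hτ : 0 < τ)
    (hS : ∀ t u, |t| ≤ τ → ‖S (-t) (S t u) - u‖ ≤ C * |t| ^ m)
    {c : H → H} (hc : Continuous c) {C' : ℝ}
    (hexp : ∀ t u, |t| ≤ τ → ‖S t u - E t u - t ^ q • c u‖ ≤ C' * |t| ^ (q + 1)) :
    (∀ u, c u = 0) ∧ ∀ t u, |t| ≤ τ → ‖S t u - E t u‖ ≤ C' * |t| ^ (q + 1) := by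
  have hsmall : ∀ᶠ t : ℝ in 𝓝 0, |t| ≤ τ :=
    (continuous_abs.tendsto' 0 0 abs_zero).eventually_le_const hτ
  have hdefect : ∀ u, (fun t ↦ S (-t) (S t u) - u) =o[𝓝 0] fun t ↦ t ^ q := fun u ↦
    IsBigO.trans_isLittleO
      (.of_bound C <| hsmall.mono fun t ht ↦ by simpa using hS t u ht) (isLittleO_pow_pow hqm)
  have hc0 : ∀ u, c u = 0 := fun u ↦
    (HasLocalErrorExpansionAt.of_norm_le hτ hexp u).coeff_eq_zero hq hq0 hF hE0 hE
      hc.continuousAt (hdefect u)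
  exact ⟨hc0, fun t u ht ↦ by simpa [hc0] using hexp t u ht⟩

end NormedSpace

/-- If an almost-self-adjoint one-step map `Ŝ` (self-adjointness defect `O(t^{2p+2})`,
`p ≥ 2` even) for the flow of `u' = F(u)` (`F` bounded and Lipschitz) admits a local error
expansion `Ŝ(t,u) - E(t,u) = t^{p+2} c(u) + r(t,u)` with `c` bounded and Lipschitz and
`‖r(t,u)‖ ≤ C'|t|^{p+3}`, then `c ≡ 0` and hence `Ŝ` has order `p+2`. -/
theorem almost_selfadjoint_corrected_scheme_order
    {H : Type*} [NormedAddCommGroup H] [NormedSpace ℝ H] [CompleteSpace H]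
    (p : ℕ) (hp : 2 ≤ p) (hpeven : Even p)
    (F : H → H) (M : ℝ) (hFb : ∀ u, ‖F u‖ ≤ M)
    (Λ : NNReal) (hFlip : LipschitzWith Λ F)
    (E : ℝ → H → H)
    (hE0 : ∀ u, E 0 u = u)
    (hgroup : ∀ t s u, E (t + s) u = E t (E s u))
    (hEint : ∀ t u, E t u = u + ∫ σ in (0:ℝ)..t, F (E σ u))
    (Shat : ℝ → H → H) (hShat0 : ∀ u, Shat 0 u = u)
    (C tstar : ℝ) (hC : 0 ≤ C) (htstar : 0 < tstar)
    (hsym : ∀ t u, |t| ≤ tstar → ‖Shat (-t) (Shat t u) - u‖ ≤ C * |t| ^ (2 * p + 2))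
    (c : H → H) (Mc : ℝ) (hcb : ∀ u, ‖c u‖ ≤ Mc)
    (Λc : NNReal) (hclip : LipschitzWith Λc c)
    (r : ℝ → H → H) (C' : ℝ)
    (hexp : ∀ t u, Shat t u - E t u = t ^ (p + 2) • c u + r t u)
    (hr : ∀ t u, |t| ≤ tstar → ‖r t u‖ ≤ C' * |t| ^ (p + 3)) :
    (∀ u, c u = 0) ∧
      ∀ t u, |t| ≤ tstar → ‖Shat t u - E t u‖ ≤ C' * |t| ^ (p + 3) :=
  almost_selfadjoint_corrected_scheme_order_general (hpeven.add even_two) (by omega) (by omega)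
    hFlip hE0 (isIntegralCurve_flow_of_eq_add_integral hFlip.continuous hFb hgroup hEint) htstar
    hsym hclip.continuous fun t u ht ↦ by simpa [hexp] using hr t u ht
end

section
/- Let H be a real Banach space, p ≥ 1 a natural number, T > 0, and Θ : ℝ → H be (p+1)-times continuously differentiable on [0,T] with Θ^{(j)}(0) = 0 for all 0 ≤ j ≤ p−1. Let M = sup_{s ∈ [0,T]} ‖Θ^{(p+1)}(s)‖. Then for every t ∈ [0,T], the Hermite-type one-point quadrature approximation of the integral satisfies the error bound ‖∫₀ᵗ Θ(s) ds − (t/(p+1))·Θ(t)‖ ≤ (2/(p+1)!)·M·t^{p+2}. -/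
/-!
Up to the factor `p + 1`, the quadrature error is `(p + 1) F - (x - a) F'`, where `F` is the
primitive of `Θ` vanishing at `a`. Euler's operator `r - (x - a) d/dx` satisfies
`d/dx ∘ (r - (x - a) d/dx) = ((r - 1) - (x - a) d/dx) ∘ d/dx`, so differentiating the error `p + 1`
times lowers `r = p + 1` to `0` and leaves only `-(x - a) Θ⁽ᵖ⁺¹⁾`, of norm at most `M (x - a)`.
All the intermediate derivatives vanish at `a`, so integrating back `p + 1` times divides by
`(p + 2)!` and raises the power of `x - a` to `p + 2`. The resulting constant is optimal, as
`Θ(x) = (x - a)ᵖ⁺¹` shows.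
-/

open Set

section

variable {E : Type*} [NormedAddCommGroup E] [NormedSpace ℝ E] {a b C M x : ℝ}

theorem norm_le_of_norm_deriv_le_mul_pow {f f' : ℝ → E} {n : ℕ} (ha : f a = 0)
    (hf : ∀ y ∈ Icc a b, HasDerivWithinAt f (f' y) (Icc a b) y)
    (bound : ∀ y ∈ Ico a b, ‖f' y‖ ≤ C * (y - a) ^ n) (hx : x ∈ Icc a b) :
    ‖f x‖ ≤ C / (n + 1) * (x - a) ^ (n + 1) := by
  have hB (y : ℝ) :
      HasDerivAt (fun z ↦ C / (n + 1) * (z - a) ^ (n + 1)) (C * (y - a) ^ n) y := by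
    refine (((hasDerivAt_id y).sub_const a).pow (n + 1)).const_mul (C / (n + 1 : ℝ))
      |>.congr_deriv ?_
    simp only [id, add_tsub_cancel_right, Nat.cast_add, Nat.cast_one, mul_one]
    field_simp
  refine image_norm_le_of_norm_deriv_right_le_deriv_boundary
    (fun y hy ↦ (hf y hy).continuousWithinAt) (fun y hy ↦ ?_) (by simp [ha]) hB bound hx
  exact (hf y (Ico_subset_Icc_self hy)).mono_of_mem_nhdsWithin (Icc_mem_nhdsGE_of_mem hy)

theorem hasDerivWithinAt_smul_sub_sub_smul {f f' : ℝ → E} {f'' : E} {s : Set ℝ} (r : ℝ)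
    (hf : HasDerivWithinAt f (f' x) s x) (hf' : HasDerivWithinAt f' f'' s x) :
    HasDerivWithinAt (fun y ↦ r • f y - (y - a) • f' y) ((r - 1) • f' x - (x - a) • f'') s x := by
  refine ((hf.const_smul r).sub
    (((hasDerivWithinAt_id x s).sub_const a).smul hf')).congr_deriv ?_
  simp only [id]
  module

theorem norm_smul_sub_sub_smul_le {f f' f'' : ℝ → E} {n : ℕ} (r : ℝ) (ha : f a = 0)
    (hf : ∀ y ∈ Icc a b, HasDerivWithinAt f (f' y) (Icc a b) y)
    (hf' : ∀ y ∈ Icc a b, HasDerivWithinAt f' (f'' y) (Icc a b) y)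
    (bound : ∀ y ∈ Ico a b,
      ‖(r - 1) • f' y - (y - a) • f'' y‖ ≤ M / n.factorial * (y - a) ^ n)
    (hx : x ∈ Icc a b) :
    ‖r • f x - (x - a) • f' x‖ ≤ M / (n + 1).factorial * (x - a) ^ (n + 1) := by
  have hconst : M / n.factorial / (n + 1) = M / (n + 1).factorial := by
    rw [div_div, ← Nat.cast_succ, ← Nat.cast_mul, mul_comm, ← Nat.factorial_succ]
  rw [← hconst]
  exact norm_le_of_norm_deriv_le_mul_pow (by simp [ha])
    (fun y hy ↦ hasDerivWithinAt_smul_sub_sub_smul r (hf y hy) (hf' y hy)) bound hx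

theorem norm_smul_sub_sub_smul_derivWithin_le {f : ℝ → E} {n : ℕ} (hab : a < b)
    (hf : ContDiffOn ℝ (n + 1) f (Icc a b))
    (hf0 : ∀ j < n, iteratedDerivWithin j f (Icc a b) a = 0)
    (hM : ∀ y ∈ Icc a b, ‖iteratedDerivWithin (n + 1) f (Icc a b) y‖ ≤ M) (hx : x ∈ Icc a b) :
    ‖(n : ℝ) • f x - (x - a) • derivWithin f (Icc a b) x‖ ≤
      M / (n + 1).factorial * (x - a) ^ (n + 1) := by
  induction n generalizing f x with
  | zero =>
    have hxa : 0 ≤ x - a := sub_nonneg.2 hx.1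
    simpa [norm_smul, abs_of_nonneg hxa, mul_comm] using
      mul_le_mul_of_nonneg_left (hM x hx) hxa
  | succ n ih =>
    have hf' : ContDiffOn ℝ (n + 1) (derivWithin f (Icc a b)) (Icc a b) :=
      hf.derivWithin (uniqueDiffOn_Icc hab) (by norm_cast)
    have hfa : f a = 0 := by simpa using hf0 0 n.succ_pos
    have hf0' (j : ℕ) (hj : j < n) :
        iteratedDerivWithin j (derivWithin f (Icc a b)) (Icc a b) a = 0 := by
      rw [← iteratedDerivWithin_succ']
      exact hf0 (j + 1) (by lia)
    refine norm_smul_sub_sub_smul_le _ hfa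
      (fun y hy ↦ (hf.differentiableOn (by norm_cast) y hy).hasDerivWithinAt)
      (fun y hy ↦ (hf'.differentiableOn (by norm_cast) y hy).hasDerivWithinAt)
      (fun y hy ↦ ?_) hx
    simpa using ih hf' hf0' (by simpa only [iteratedDerivWithin_succ'] using hM)
      (Ico_subset_Icc_self hy)

theorem hasDerivWithinAt_integral_of_continuousOn_Icc [CompleteSpace E] {f : ℝ → E}
    (hf : ContinuousOn f (Icc a b)) (hx : x ∈ Icc a b) :
    HasDerivWithinAt (fun y ↦ ∫ s in a..y, f s) (f x) (Icc a b) x := by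
  have : Fact (x ∈ Icc a b) := ⟨hx⟩
  have hint : IntervalIntegrable f MeasureTheory.volume a x :=
    (hf.mono (Icc_subset_Icc_right hx.2)).intervalIntegrable_of_Icc hx.1
  exact intervalIntegral.integral_hasDerivWithinAt_right hint
    (hf.stronglyMeasurableAtFilter_nhdsWithin measurableSet_Icc x) (hf x hx)

theorem hermite_quadrature_error_bound_general [CompleteSpace E] {Θ : ℝ → E} {p : ℕ} (hab : a < b)
    (hΘ : ContDiffOn ℝ (p + 1) Θ (Icc a b))
    (hΘ0 : ∀ j < p, iteratedDerivWithin j Θ (Icc a b) a = 0)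
    (hM : ∀ s ∈ Icc a b, ‖iteratedDerivWithin (p + 1) Θ (Icc a b) s‖ ≤ M) (hx : x ∈ Icc a b) :
    ‖(∫ s in a..x, Θ s) - ((x - a) / (p + 1)) • Θ x‖ ≤
      M / ((p + 1) * (p + 2).factorial) * (x - a) ^ (p + 2) := by
  have hp : (0 : ℝ) < p + 1 := by positivity
  have hscaled : ‖((p : ℝ) + 1) • (∫ s in a..x, Θ s) - (x - a) • Θ x‖ ≤
      M / (p + 2).factorial * (x - a) ^ (p + 2) :=
    norm_smul_sub_sub_smul_le (f := fun y ↦ ∫ s in a..y, Θ s) _ intervalIntegral.integral_same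
      (fun y hy ↦ hasDerivWithinAt_integral_of_continuousOn_Icc hΘ.continuousOn hy)
      (fun y hy ↦ (hΘ.differentiableOn (by norm_cast) y hy).hasDerivWithinAt)
      (fun y hy ↦ by
        simpa using norm_smul_sub_sub_smul_derivWithin_le hab hΘ hΘ0 hM (Ico_subset_Icc_self hy))
      hx
  calc ‖(∫ s in a..x, Θ s) - ((x - a) / (p + 1)) • Θ x‖
      = ‖((p : ℝ) + 1)⁻¹ • (((p : ℝ) + 1) • (∫ s in a..x, Θ s) - (x - a) • Θ x)‖ := by
        rw [smul_sub, inv_smul_smul₀ hp.ne', smul_smul, inv_mul_eq_div]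
    _ = ((p : ℝ) + 1)⁻¹ * ‖((p : ℝ) + 1) • (∫ s in a..x, Θ s) - (x - a) • Θ x‖ := by
        rw [norm_smul, Real.norm_of_nonneg (inv_nonneg.2 hp.le)]
    _ ≤ ((p : ℝ) + 1)⁻¹ * (M / (p + 2).factorial * (x - a) ^ (p + 2)) := by gcongr
    _ = M / ((p + 1) * (p + 2).factorial) * (x - a) ^ (p + 2) := by field_simp

theorem div_succ_mul_factorial_le (hM : 0 ≤ M) (p : ℕ) :
    M / ((p + 1) * (p + 2).factorial) ≤ 2 / (p + 1).factorial * M := by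
  have hfac : ((p + 1).factorial : ℝ) ≤ (p + 1) * (p + 2).factorial := by
    norm_cast
    exact (Nat.factorial_le (by lia)).trans (Nat.le_mul_of_pos_left _ p.succ_pos)
  calc M / ((p + 1) * (p + 2).factorial)
      ≤ M / (p + 1).factorial := by gcongr
    _ ≤ 2 * M / (p + 1).factorial := by
        gcongr
        linarith
    _ = 2 / (p + 1).factorial * M := by ring

end

/-- Error bound for the Hermite-type one-point quadrature approximation
`∫₀ᵗ Θ(s) ds ≈ (t/(p+1)) Θ(t)` for a `C^{p+1}` function `Θ` on `[0,T]` vanishing to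
order `p` at `0`: the error is bounded by `(2/(p+1)!) M t^{p+2}`, where `M` bounds
the `(p+1)`-st derivative of `Θ` on `[0,T]`. -/
theorem hermite_quadrature_error_bound
    {H : Type*} [NormedAddCommGroup H] [NormedSpace ℝ H] [CompleteSpace H]
    (p : ℕ) (hp : 1 ≤ p) (T : ℝ) (hT : 0 < T)
    (Θ : ℝ → H)
    (hΘ : ContDiffOn ℝ (p + 1) Θ (Set.Icc 0 T))
    (hΘ0 : ∀ j ≤ p - 1, iteratedDerivWithin j Θ (Set.Icc 0 T) 0 = 0)
    (M : ℝ)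
    (hM : ∀ s ∈ Set.Icc (0:ℝ) T, ‖iteratedDerivWithin (p + 1) Θ (Set.Icc 0 T) s‖ ≤ M)
    (t : ℝ) (ht : t ∈ Set.Icc (0:ℝ) T) :
    ‖(∫ s in (0:ℝ)..t, Θ s) - (t / ((p : ℝ) + 1)) • Θ t‖ ≤
      (2 / (Nat.factorial (p + 1) : ℝ)) * M * t ^ (p + 2) := by
  have hconst := div_succ_mul_factorial_le ((norm_nonneg _).trans (hM t ht)) p
  simpa only [sub_zero] using
    (hermite_quadrature_error_bound_general hT hΘ (fun j hj ↦ hΘ0 j (by lia)) hM ht).trans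
      (mul_le_mul_of_nonneg_right hconst (pow_nonneg (sub_nonneg.2 ht.1) _))
end

section
/- Let H be a real Banach space and F : H → H continuously Fréchet differentiable. Let w : ℝ × H → H be jointly Fréchet differentiable with w(t,u) = u + t·F((u + w(t,u))/2) for all (t,u), and write m = (u + w(t,u))/2. Define the symmetrized defect Ds(t,u) = ∂₁w(t,u) − (1/2)(F(w(t,u)) + D₂w(t,u)(F(u))). Then Ds(t,u) = z − (1/2)F(w(t,u)), where z ∈ H satisfies the linear system (Id − (t/2)F'(m))(z) = F(m) − (1/2)F(u) − (t/4)F'(m)(F(u)); equivalently, (Id − (t/2)F'(m))(Ds(t,u) + (1/2)F(w(t,u))) = F(m) − (1/2)F(u) − (t/4)F'(m)(F(u)). -/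
/-!
The step `w(t,u)` solves an implicit equation, and differentiating that equation in `t` and in `u`
gives two linear equations governed by the same operator `Id - θ t F'(m)`, which acts on `∂₁w` and
on `D₂w` respectively. The linear combination of `∂₁w` and `D₂w(F(u))` in the defect is therefore
again governed by that operator.
-/

open AffineMap
open scoped Topology

/-- `w` is a step of size `t` from `u` of the `θ`-method for `u' = F(u)` in its one-stage form:
`F` is evaluated once, at `(1 - θ) u + θ w`, rather than averaged between `u` and `w`.
The implicit midpoint rule is the case `θ = 1/2`. -/
def IsThetaStep {R E : Type*} [Ring R] [AddCommGroup E] [Module R E]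
    (F : E → E) (θ t : R) (u w : E) : Prop :=
  w = u + t • F (lineMap u w θ)

section OneHalf

variable {k E : Type*} [DivisionRing k] [NeZero (2 : k)] [AddCommGroup E] [Module k E]

theorem lineMap_one_half_eq_smul_add (x y : E) :
    lineMap x y (1/2 : k) = (1/2 : k) • (x + y) := by
  rw [lineMap_apply_module, sub_half, smul_add]

theorem isThetaStep_one_half_iff {F : E → E} {t : k} {u w : E} :
    IsThetaStep F (1/2 : k) t u w ↔ w = u + t • F ((1/2 : k) • (u + w)) := by
  rw [IsThetaStep, lineMap_one_half_eq_smul_add]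

end OneHalf

section ThetaMethod

variable {𝕜 H : Type*} [NontriviallyNormedField 𝕜] [NormedAddCommGroup H] [NormedSpace 𝕜 H]
  {F : H → H} {F' : H →L[𝕜] H} {θ t : 𝕜} {u : H}

theorem IsThetaStep.id_sub_smul_apply_deriv {w : 𝕜 → H} {w₁ : H}
    (hstep : ∀ᶠ τ in 𝓝 t, IsThetaStep F θ τ u (w τ))
    (hF : HasFDerivAt F F' (lineMap u (w t) θ)) (hw : HasDerivAt w w₁ t) :
    (ContinuousLinearMap.id 𝕜 H - (θ * t) • F') w₁ = F (lineMap u (w t) θ) := by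
  have hstage : HasDerivAt (fun τ ↦ lineMap u (w τ) θ) (θ • w₁) t := by
    simpa only [lineMap_apply_module] using (hw.fun_const_smul θ).const_add ((1 - θ) • u)
  have hrhs := ((hasDerivAt_id t).smul (hF.comp_hasDerivAt t hstage)).const_add u
  have himplicit := hw.unique (hrhs.congr_of_eventuallyEq hstep)
  simp only [id_eq, Function.comp_apply, map_smul, one_smul] at himplicit
  simp only [sub_apply, smul_apply, ContinuousLinearMap.id_apply]
  linear_combination (norm := module) himplicit

theorem IsThetaStep.id_sub_smul_comp_fderiv {w : H → H} {Dw : H →L[𝕜] H}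
    (hstep : ∀ᶠ v in 𝓝 u, IsThetaStep F θ t v (w v))
    (hF : HasFDerivAt F F' (lineMap u (w u) θ)) (hw : HasFDerivAt w Dw u) :
    (ContinuousLinearMap.id 𝕜 H - (θ * t) • F') ∘L Dw =
      ContinuousLinearMap.id 𝕜 H + ((1 - θ) * t) • F' := by
  have hstage : HasFDerivAt (fun v ↦ lineMap v (w v) θ)
      ((1 - θ) • ContinuousLinearMap.id 𝕜 H + θ • Dw) u := by
    simpa only [lineMap_apply_module, id_eq] using
      ((hasFDerivAt_id u).fun_const_smul (1 - θ)).fun_add (hw.fun_const_smul θ)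
  have hrhs := (hasFDerivAt_id u).add
    ((HasFDerivAt.comp (f := fun v ↦ lineMap v (w v) θ) u hF hstage).const_smul t)
  have himplicit := hw.unique (hrhs.congr_of_eventuallyEq hstep)
  ext v
  have himplicit_apply := DFunLike.congr_fun himplicit v
  simp only [add_apply, sub_apply, smul_apply, ContinuousLinearMap.comp_apply,
    ContinuousLinearMap.id_apply, map_add, map_smul] at himplicit_apply ⊢
  linear_combination (norm := module) himplicit_apply

/-- The weight `c` interpolates between the classical defect `∂₁w - F(w)` at `c = 0` and
`∂₁w - D₂w(F(u))` at `c = 1`; the symmetrized defect is `c = 1/2`. -/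
theorem implicit_midpoint_symmetrized_defect_general (c : 𝕜)
    {w : 𝕜 → H → H} {w₁ : H} {Dw : H →L[𝕜] H} {m Ds : H}
    (hm : m = lineMap u (w t u) θ) (hF : HasFDerivAt F F' m)
    (hw₁ : HasDerivAt (fun τ ↦ w τ u) w₁ t) (hDw : HasFDerivAt (w t) Dw u)
    (hstep_time : ∀ᶠ τ in 𝓝 t, IsThetaStep F θ τ u (w τ u))
    (hstep_init : ∀ᶠ v in 𝓝 u, IsThetaStep F θ t v (w t v))
    (hDs : Ds = w₁ - ((1 - c) • F (w t u) + c • Dw (F u))) :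
    (ContinuousLinearMap.id 𝕜 H - (θ * t) • F') (Ds + (1 - c) • F (w t u)) =
      F m - c • F u - (c * (1 - θ) * t) • F' (F u) := by
  subst hm
  calc (ContinuousLinearMap.id 𝕜 H - (θ * t) • F') (Ds + (1 - c) • F (w t u))
    _ = (ContinuousLinearMap.id 𝕜 H - (θ * t) • F') w₁ -
          c • ((ContinuousLinearMap.id 𝕜 H - (θ * t) • F') ∘L Dw) (F u) := by
      rw [ContinuousLinearMap.comp_apply, ← map_smul, ← map_sub, hDs]
      congr 1
      abel
    _ = F (lineMap u (w t u) θ) -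
          c • (ContinuousLinearMap.id 𝕜 H + ((1 - θ) * t) • F') (F u) := by
      rw [IsThetaStep.id_sub_smul_apply_deriv hstep_time hF hw₁,
        IsThetaStep.id_sub_smul_comp_fderiv hstep_init hF hDw]
    _ = F (lineMap u (w t u) θ) - c • F u - (c * (1 - θ) * t) • F' (F u) := by
      simp only [add_apply, smul_apply, ContinuousLinearMap.id_apply]
      module

end ThetaMethod

/-- For the implicit midpoint rule `w(t,u) = u + t F((u + w(t,u))/2)`, the symmetrized
defect `Ds(t,u) = ∂₁w(t,u) - (1/2)(F(w(t,u)) + D₂w(t,u)(F(u)))` satisfies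
`Ds(t,u) = z - (1/2)F(w(t,u))` where `z` solves
`(Id - (t/2)F'(m)) z = F(m) - (1/2)F(u) - (t/4)F'(m)(F(u))`, with `m = (u+w(t,u))/2`. -/
theorem implicit_midpoint_symmetrized_defect
    {H : Type*} [NormedAddCommGroup H] [NormedSpace ℝ H]
    (F : H → H) (F' : H → (H →L[ℝ] H))
    (hF : ∀ x, HasFDerivAt F (F' x) x) (hF' : Continuous F')
    (w : ℝ → H → H) (w₁ : ℝ → H → H) (Dw : ℝ → H → (H →L[ℝ] H))
    (hw : Differentiable ℝ (fun q : ℝ × H => w q.1 q.2))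
    (hw₁ : ∀ t u, HasDerivAt (fun τ => w τ u) (w₁ t u) t)
    (hDw : ∀ t u, HasFDerivAt (w t) (Dw t u) u)
    (hmid : ∀ t u, w t u = u + t • F ((1/2 : ℝ) • (u + w t u)))
    (Ds : ℝ → H → H)
    (hDs : ∀ t u, Ds t u = w₁ t u - (1/2 : ℝ) • (F (w t u) + Dw t u (F u)))
    (t : ℝ) (u : H) (m : H) (hm : m = (1/2 : ℝ) • (u + w t u)) :
    ∃ z : H,
      (ContinuousLinearMap.id ℝ H - (t / 2) • F' m) z
          = F m - (1/2 : ℝ) • F u - (t / 4) • (F' m (F u)) ∧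
      Ds t u = z - (1/2 : ℝ) • F (w t u) := by
  refine ⟨Ds t u + (1/2 : ℝ) • F (w t u), ?_, by module⟩
  convert implicit_midpoint_symmetrized_defect_general (1/2 : ℝ) (Ds := Ds t u)
    (hm.trans (lineMap_one_half_eq_smul_add u (w t u)).symm) (hF m) (hw₁ t u) (hDw t u)
    (.of_forall fun τ ↦ isThetaStep_one_half_iff.2 (hmid τ u))
    (.of_forall fun v ↦ isThetaStep_one_half_iff.2 (hmid t v)) (by rw [hDs]; module) using 3 <;>
    ring_nf
end

section
/- Let J, K ≥ 1 and p ≥ 0 be natural numbers, and let a : {1,…,J} × {1,…,K} → ℝ and c : {1,…,K} → ℝ be coefficients satisfying the symmetry conditions c_k − 1/2 = 1/2 − c_{K+1−k} for all k, and a_{j,k} = a_{J+1−j, K+1−k} for all j, k. Define X_j = Σ_{k=1}^{K} a_{j,k} and Y_j = Σ_{k=1}^{K} a_{j,k}(c_k − 1/2). Then Σ_{j=1}^{J} X_j^p · Y_j = 0. -/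
/-!
Reversing `j` and `k` together leaves `X_j` unchanged and negates `Y_j`, because the centred nodes
`c_k - 1/2` are odd under reversal. Reindexing `∑ j, X_j ^ p * Y_j` by `j ↦ J + 1 - j` therefore
negates it.
-/

open Equiv (Perm)

theorem sum_eq_zero_of_eq_neg_comp_perm {ι M : Type*} [Fintype ι] [AddCommGroup M]
    [IsAddTorsionFree M] (σ : Perm ι) {f : ι → M} (hf : ∀ i, f i = -f (σ i)) :
    ∑ i, f i = 0 := by
  refine self_eq_neg.mp ?_
  calc
    ∑ i, f i = ∑ i, -f i := Fintype.sum_equiv σ f (-f) hf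
    _ = -∑ i, f i := Finset.sum_neg_distrib f

section PermSymmetry

variable {κ R : Type*} [Fintype κ] [NonUnitalNonAssocRing R]

theorem sum_mul_eq_neg_sum_mul_of_eq_neg_comp_perm (τ : Perm κ) {u v d : κ → R}
    (huv : ∀ k, u k = v (τ k)) (hd : ∀ k, d k = -d (τ k)) :
    ∑ k, u k * d k = -∑ k, v k * d k :=
  calc
    ∑ k, u k * d k = ∑ k, -(v k * d k) :=
      Fintype.sum_equiv τ _ _ fun k => by rw [huv, hd, mul_neg]
    _ = -∑ k, v k * d k := Finset.sum_neg_distrib _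

theorem cfm_symmetry_cancellation_general {ι : Type*} [Fintype ι] [IsAddTorsionFree R]
    (σ : Perm ι) (τ : Perm κ) (f : R → R) {a : ι → κ → R} {d : κ → R}
    (hd : ∀ k, d k = -d (τ k)) (ha : ∀ j k, a j k = a (σ j) (τ k)) :
    ∑ j, f (∑ k, a j k) * ∑ k, a j k * d k = 0 := by
  refine sum_eq_zero_of_eq_neg_comp_perm σ fun j => ?_
  have hX : ∑ k, a j k = ∑ k, a (σ j) k := Fintype.sum_equiv τ _ _ (ha j)
  have hY : ∑ k, a j k * d k = -∑ k, a (σ j) k * d k :=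
    sum_mul_eq_neg_sum_mul_of_eq_neg_comp_perm τ (ha j) hd
  rw [hX, hY, mul_neg]

end PermSymmetry

/-- Key cancellation for self-adjoint CFM integrators: if the coefficients satisfy the
symmetry conditions `c_k - 1/2 = 1/2 - c_{K+1-k}` and `a_{j,k} = a_{J+1-j,K+1-k}`, then
with `X_j = Σ_k a_{j,k}` and `Y_j = Σ_k a_{j,k}(c_k - 1/2)` one has `Σ_j X_j^p Y_j = 0`.
(Indices are 0-based via `Fin`, with `K+1-k` realized by `Fin.rev`.) -/
theorem cfm_symmetry_cancellation
    (J K : ℕ) (hJ : 1 ≤ J) (hK : 1 ≤ K) (p : ℕ)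
    (a : Fin J → Fin K → ℝ) (c : Fin K → ℝ)
    (hc : ∀ k : Fin K, c k - 1/2 = 1/2 - c k.rev)
    (ha : ∀ (j : Fin J) (k : Fin K), a j k = a j.rev k.rev) :
    ∑ j : Fin J, (∑ k : Fin K, a j k) ^ p * (∑ k : Fin K, a j k * (c k - 1/2)) = 0 :=
  cfm_symmetry_cancellation_general Fin.revPerm Fin.revPerm (· ^ p)
    (fun k => (hc k).trans (neg_sub _ _).symm) ha
end
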